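/- arXiv:1206.5124 — 3 statements merged into one kernel-verified Lean document; each statement's English description precedes it below -/
import Mathlib

section
/- Let C be an [n,k] linear code over F_q with generator matrix rows w_1,...,w_k. Then I(C) ⊆ I_2: every binomial x^u − x^v with u,v ∈ ℕ^{n(q−1)} and ∇(u − v) ∈ C belongs to the ideal I_2 generated by the binomials x^{▲(α^j w_i)} − 1 (1 ≤ i ≤ k, 1 ≤ j ≤ q−1) together with the additive-table relations ⋃_{i=1}^n R(T_+^{(i)}). -/
open MvPolynomial Finset

/-- The set of binomials `R(T₊⁽ⁱ⁾)` (over all blocks `i = 1,…,n`) encoding the additive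
table of the finite field `F` with primitive element `α`: for indices `u v w ∈ {1,…,q-1}`,
`x_{iu} x_{iv} - x_{iw}` whenever `α^u + α^v = α^w`, and `x_{iu} x_{iv} - 1` whenever
`α^u + α^v = 0`.  (The variable `x_{ij}` is indexed by `(i, j)` with `j : Fin (q-1)`
representing the exponent `j+1 ∈ {1,…,q-1}`.) -/
def addRel (F : Type) [Field F] [Fintype F] (n : ℕ) (α : F) :
    Set (MvPolynomial (Fin n × Fin (Fintype.card F - 1)) (ZMod 2)) :=
  {p | ∃ (i : Fin n) (u v w : Fin (Fintype.card F - 1)),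
      α ^ (u.1 + 1) + α ^ (v.1 + 1) = α ^ (w.1 + 1) ∧
      p = X (i, u) * X (i, v) - X (i, w)} ∪
  {p | ∃ (i : Fin n) (u v : Fin (Fintype.card F - 1)),
      α ^ (u.1 + 1) + α ^ (v.1 + 1) = 0 ∧
      p = X (i, u) * X (i, v) - 1}

/-- The squarefree monomial `x^{▲a}` attached to a vector `a ∈ F^n`:
`x^{▲a} = ∏_{i : aᵢ ≠ 0} x_{i jᵢ}` where `aᵢ = α^{jᵢ}`; the discrete logarithm
(base `α`) is supplied as a function `L` on the nonzero elements of `F`. -/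
noncomputable def xup (F : Type) [Field F] [Fintype F] [DecidableEq F] (n : ℕ)
    (L : {x : F // x ≠ 0} → Fin (Fintype.card F - 1)) (a : Fin n → F) :
    MvPolynomial (Fin n × Fin (Fintype.card F - 1)) (ZMod 2) :=
  ∏ i : Fin n, if h : a i ≠ 0 then X (i, L ⟨a i, h⟩) else 1

/-- The binomial ideal `I(C)` associated to a linear code `C ⊆ F^n`:
it is generated by all binomials `x^u - x^v` with `u, v ∈ ℕ^{n(q-1)}` such that
`∇(u - v) ∈ C`, where `∇` maps an exponent vector `(c_{ij})` to the vector of `F^n`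
whose `i`-th coordinate is `∑_j c_{ij} α^j`. -/
noncomputable def codeIdeal (F : Type) [Field F] [Fintype F] (n : ℕ) (α : F)
    (C : Submodule F (Fin n → F)) :
    Ideal (MvPolynomial (Fin n × Fin (Fintype.card F - 1)) (ZMod 2)) :=
  Ideal.span {p | ∃ u v : Fin n × Fin (Fintype.card F - 1) → ℕ,
    (fun i => (∑ j, u (i, j) • α ^ (j.1 + 1)) - ∑ j, v (i, j) • α ^ (j.1 + 1)) ∈ C ∧
    p = (∏ s, X s ^ u s) - ∏ s, X s ^ v s}

/-- The ideal `I₂` generated by the row binomials `x^{▲(αʲ wᵢ)} - 1`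
(for the rows `w₁, …, w_k` of a generator matrix and `j = 1, …, q-1`)
together with the additive-table relations `⋃ᵢ R(T₊⁽ⁱ⁾)`. -/
noncomputable def rowIdeal (F : Type) [Field F] [Fintype F] [DecidableEq F] (n k : ℕ) (α : F)
    (L : {x : F // x ≠ 0} → Fin (Fintype.card F - 1)) (w : Fin k → Fin n → F) :
    Ideal (MvPolynomial (Fin n × Fin (Fintype.card F - 1)) (ZMod 2)) :=
  Ideal.span ({p | ∃ (i : Fin k) (j : Fin (Fintype.card F - 1)),
      p = xup F n L (α ^ (j.1 + 1) • w i) - 1} ∪ addRel F n α)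

/-!
Modulo any ideal containing the additive table of a finite abelian group `A`, the map
`a ↦ x^{▲a}` is a homomorphism from `A^ι` to the multiplicative monoid of the quotient ring, and
every monomial satisfies `x^u ≡ x^{▲(∇u)}`.  The relations `x^{▲s} - 1` put the generators `s` of
the code into the kernel of this homomorphism, hence the whole code.  So `∇u - ∇v ∈ C` gives
`x^u ≡ x^{▲(∇u)} = x^{▲(∇u - ∇v)} x^{▲(∇v)} ≡ x^v`.

A linear code is the additive group generated by the multiples `α^j w_i` of the rows of its
generator matrix.
-/

section AdditiveTable

variable {ι J A : Type*} [AddCommMonoid A]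

/-- The map `∇` on exponent vectors, for an enumeration `e` of the nonzero elements of `A`
(`e j = α^j` in a finite field).  It is taken on natural exponents only, `∇(u - v)` being
`nabla e u - nabla e v`. -/
def nabla [Fintype J] (e : J ≃ {a : A // a ≠ 0}) (u : ι × J → ℕ) (i : ι) : A :=
  ∑ j, u (i, j) • (e j : A)

variable (R : Type*) [CommRing R]

variable (ι) in
/-- The binomials `⋃ᵢ R(T₊⁽ⁱ⁾)` encoding the addition table of `A`, over coefficients `R`. -/
def additiveTable (e : J ≃ {a : A // a ≠ 0}) : Set (MvPolynomial (ι × J) R) :=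
  {p | ∃ (i : ι) (u v w : J), (e u : A) + e v = e w ∧ p = X (i, u) * X (i, v) - X (i, w)} ∪
  {p | ∃ (i : ι) (u v : J), (e u : A) + e v = 0 ∧ p = X (i, u) * X (i, v) - 1}

/-- The factor of `x^{▲a}` contributed by block `i` when the `i`-th coordinate of the vector
is `a`. -/
noncomputable def blockMonomial [DecidableEq A] (e : J ≃ {a : A // a ≠ 0}) (i : ι) (a : A) :
    MvPolynomial (ι × J) R :=
  if h : a ≠ 0 then X (i, e.symm ⟨a, h⟩) else 1

/-- The squarefree monomial `x^{▲a}` of a vector `a` over `A`. -/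
noncomputable def upMonomial [Fintype ι] [DecidableEq A] (e : J ≃ {a : A // a ≠ 0})
    (a : ι → A) : MvPolynomial (ι × J) R :=
  ∏ i, blockMonomial R e i (a i)

variable {R} [DecidableEq A] {e : J ≃ {a : A // a ≠ 0}}

@[simp]
theorem blockMonomial_zero (i : ι) : blockMonomial R e i 0 = 1 :=
  dif_neg (not_not.2 rfl)

@[simp]
theorem blockMonomial_coe (i : ι) (j : J) : blockMonomial R e i (e j) = X (i, j) := by
  simp [blockMonomial, (e j).2]

variable {I : Ideal (MvPolynomial (ι × J) R)}

theorem mk_blockMonomial_add (hI : additiveTable ι R e ⊆ I) (i : ι) (a b : A) :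
    Ideal.Quotient.mk I (blockMonomial R e i (a + b)) =
      Ideal.Quotient.mk I (blockMonomial R e i a) *
        Ideal.Quotient.mk I (blockMonomial R e i b) := by
  have eq_zero_or_coe (c : A) : c = 0 ∨ ∃ j, (e j : A) = c :=
    or_iff_not_imp_left.2 fun hc => ⟨e.symm ⟨c, hc⟩, by simp⟩
  obtain rfl | ⟨u, rfl⟩ := eq_zero_or_coe a
  · simp
  obtain rfl | ⟨v, rfl⟩ := eq_zero_or_coe b
  · simp
  rw [← map_mul, eq_comm, Ideal.Quotient.eq, blockMonomial_coe, blockMonomial_coe]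
  obtain huv | ⟨w, huvw⟩ := eq_zero_or_coe (e u + e v : A)
  · rw [huv, blockMonomial_zero]
    exact hI (Or.inr ⟨i, u, v, huv, rfl⟩)
  · rw [← huvw, blockMonomial_coe]
    exact hI (Or.inl ⟨i, u, v, w, huvw.symm, rfl⟩)

/-- The homomorphism `a ↦ x_{ij} mod I`, where `a = e j`, sending `0` to `1`, for an ideal `I`
containing the additive table. -/
noncomputable def blockHom (hI : additiveTable ι R e ⊆ I) (i : ι) :
    Multiplicative A →* MvPolynomial (ι × J) R ⧸ I where
  toFun a := Ideal.Quotient.mk I (blockMonomial R e i a.toAdd)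
  map_one' := by simp
  map_mul' a b := mk_blockMonomial_add hI i a.toAdd b.toAdd

variable [Fintype ι]

/-- The homomorphism `a ↦ x^{▲a} mod I` on vectors, for an ideal `I` containing the additive
table. -/
noncomputable def upHom (hI : additiveTable ι R e ⊆ I) :
    Multiplicative (ι → A) →* MvPolynomial (ι × J) R ⧸ I where
  toFun a := ∏ i, blockHom hI i (.ofAdd (a.toAdd i))
  map_one' := by simp
  map_mul' a b := by simp [prod_mul_distrib]

theorem upHom_ofAdd (hI : additiveTable ι R e ⊆ I) (a : ι → A) :
    upHom hI (.ofAdd a) = Ideal.Quotient.mk I (upMonomial R e a) :=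
  (map_prod (Ideal.Quotient.mk I) _ _).symm

theorem upHom_ofAdd_nabla [Fintype J] (hI : additiveTable ι R e ⊆ I) (u : ι × J → ℕ) :
    upHom hI (.ofAdd (nabla e u)) = Ideal.Quotient.mk I (∏ s, X s ^ u s) := by
  have blockHom_coe (i : ι) (j : J) :
      blockHom hI i (.ofAdd (e j : A)) = Ideal.Quotient.mk I (X (i, j)) :=
    congrArg _ (blockMonomial_coe i j)
  calc upHom hI (.ofAdd (nabla e u))
      = ∏ i, blockHom hI i (.ofAdd (∑ j, u (i, j) • (e j : A))) := rfl
    _ = ∏ i, ∏ j, Ideal.Quotient.mk I (X (i, j)) ^ u (i, j) := by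
      simp only [ofAdd_sum, ofAdd_nsmul, map_prod, map_pow, blockHom_coe]
    _ = Ideal.Quotient.mk I (∏ s, X s ^ u s) := by
      simp only [map_prod, map_pow, Fintype.prod_prod_type]

end AdditiveTable

section AdditiveCodes

variable {ι J A : Type*} [AddCommGroup A] [Fintype ι] (R : Type*) [CommRing R]

/-- The binomial ideal `I(C)` of an additive code `C` over the group `A`. -/
noncomputable def additiveCodeIdeal [Fintype J] (e : J ≃ {a : A // a ≠ 0})
    (C : AddSubgroup (ι → A)) : Ideal (MvPolynomial (ι × J) R) :=
  Ideal.span {p | ∃ u v : ι × J → ℕ,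
    nabla e u - nabla e v ∈ C ∧ p = (∏ s, X s ^ u s) - ∏ s, X s ^ v s}

/-- The analogue of `I₂` for a set `S` of additive generators of a code: the ideal generated by
the binomials `x^{▲a} - 1` with `a ∈ S` and by the additive table. -/
noncomputable def generatorIdeal [DecidableEq A] (e : J ≃ {a : A // a ≠ 0})
    (S : Set (ι → A)) : Ideal (MvPolynomial (ι × J) R) :=
  Ideal.span ({p | ∃ a ∈ S, p = upMonomial R e a - 1} ∪ additiveTable ι R e)

variable [DecidableEq A]

variable {R} in
theorem ofAdd_mem_ker_upHom_of_mem_closure {e : J ≃ {a : A // a ≠ 0}}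
    {I : Ideal (MvPolynomial (ι × J) R)} (hI : additiveTable ι R e ⊆ I) {S : Set (ι → A)}
    (hS : ∀ s ∈ S, upMonomial R e s - 1 ∈ I) {a : ι → A} (ha : a ∈ AddSubgroup.closure S) :
    Multiplicative.ofAdd a ∈ (upHom hI).ker := by
  suffices AddSubgroup.closure S ≤ Subgroup.toAddSubgroup' (upHom hI).ker from this ha
  refine (AddSubgroup.closure_le _).2 fun s hs => ?_
  change upHom hI (.ofAdd s) = 1
  rw [upHom_ofAdd, ← map_one (Ideal.Quotient.mk I), Ideal.Quotient.eq]
  exact hS s hs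

theorem code_ideal_le_row_ideal_general [Fintype J] (e : J ≃ {a : A // a ≠ 0}) (S : Set (ι → A)) :
    additiveCodeIdeal R e (AddSubgroup.closure S) ≤ generatorIdeal R e S := by
  refine Ideal.span_le.2 ?_
  rintro _ ⟨u, v, huv, rfl⟩
  have hI : additiveTable ι R e ⊆ generatorIdeal R e S :=
    Set.subset_union_right.trans Ideal.subset_span
  have hS : ∀ s ∈ S, upMonomial R e s - 1 ∈ generatorIdeal R e S := fun s hs =>
    Ideal.subset_span (Or.inl ⟨s, hs, rfl⟩)
  refine Ideal.Quotient.eq.1 ?_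
  rw [← upHom_ofAdd_nabla hI, ← upHom_ofAdd_nabla hI, ← MonoidHom.div_mem_ker_iff]
  exact ofAdd_mem_ker_upHom_of_mem_closure hI hS huv

end AdditiveCodes

section LinearCodes

theorem closure_range_smul_eq_span {K M κ J : Type*} [Ring K] [AddCommGroup M] [Module K M]
    (e : J ≃ {c : K // c ≠ 0}) (w : κ → M) :
    AddSubgroup.closure (Set.range fun s : κ × J => (e s.2 : K) • w s.1) =
      (Submodule.span K (Set.range w)).toAddSubgroup := by
  refine le_antisymm ((AddSubgroup.closure_le _).2 ?_) fun x hx => ?_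
  · rintro _ ⟨⟨i, j⟩, rfl⟩
    exact Submodule.smul_mem _ _ (Submodule.subset_span ⟨i, rfl⟩)
  · induction hx using Submodule.closure_induction with
    | zero => exact zero_mem _
    | add _ _ _ _ hx hy => exact add_mem hx hy
    | smul_mem c _ hx =>
      obtain ⟨i, rfl⟩ := hx
      obtain rfl | hc := eq_or_ne c 0
      · simp
      · exact AddSubgroup.subset_closure ⟨(i, e.symm ⟨c, hc⟩), by simp⟩

theorem ne_zero_of_pow_dlog_eq {F : Type*} [MonoidWithZero F] [Nontrivial F] {N : ℕ} {α : F}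
    {L : {x : F // x ≠ 0} → Fin N} (hL : ∀ x : {x : F // x ≠ 0}, α ^ ((L x).1 + 1) = x.1) :
    α ≠ 0 := by
  rintro rfl
  simpa using hL ⟨1, one_ne_zero⟩

/-- The enumeration `j ↦ α^(j+1)` of the nonzero elements of `F`, with the discrete logarithm `L`
as its inverse. -/
def powEquiv {F : Type*} [GroupWithZero F] [Fintype F] {α : F}
    {L : {x : F // x ≠ 0} → Fin (Fintype.card F - 1)}
    (hL : ∀ x : {x : F // x ≠ 0}, α ^ ((L x).1 + 1) = x.1) :
    Fin (Fintype.card F - 1) ≃ {x : F // x ≠ 0} where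
  toFun j := ⟨α ^ (j.1 + 1), pow_ne_zero _ (ne_zero_of_pow_dlog_eq hL)⟩
  invFun := L
  left_inv := by
    classical
    exact Function.LeftInverse.rightInverse_of_card_le (fun x => Subtype.ext (hL x))
      (by simp [Fintype.card_subtype_compl])
  right_inv x := Subtype.ext (hL x)

variable {F : Type} [Field F] [Fintype F] {n k : ℕ} {α : F}
  {L : {x : F // x ≠ 0} → Fin (Fintype.card F - 1)}
  (hL : ∀ x : {x : F // x ≠ 0}, α ^ ((L x).1 + 1) = x.1)

theorem codeIdeal_eq_additiveCodeIdeal (C : Submodule F (Fin n → F)) :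
    codeIdeal F n α C = additiveCodeIdeal (ZMod 2) (powEquiv hL) C.toAddSubgroup :=
  rfl

theorem rowIdeal_eq_generatorIdeal [DecidableEq F] (w : Fin k → Fin n → F) :
    rowIdeal F n k α L w = generatorIdeal (ZMod 2) (powEquiv hL)
      (Set.range fun s : Fin k × Fin (Fintype.card F - 1) => (powEquiv hL s.2 : F) • w s.1) := by
  simp only [generatorIdeal, Set.exists_range_iff, Prod.exists]
  rfl

end LinearCodes

/-- `I(C) ⊆ I₂`: every binomial `x^u - x^v` with `u, v ∈ ℕ^{n(q-1)}`
and `∇(u - v) ∈ C` belongs to the ideal `I₂` generated by the row binomials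
`x^{▲(αʲ wᵢ)} - 1` together with the additive-table relations; consequently
`I(C) ≤ I₂`. -/
theorem code_ideal_le_row_ideal
    (F : Type) [Field F] [Fintype F] [DecidableEq F] (n k : ℕ) (hn : 0 < n) (α : F)
    (L : {x : F // x ≠ 0} → Fin (Fintype.card F - 1))
    (hL : ∀ x : {x : F // x ≠ 0}, α ^ ((L x).1 + 1) = x.1)
    (C : Submodule F (Fin n → F)) (w : Fin k → Fin n → F)
    (hw : Submodule.span F (Set.range w) = C)
    (hdim : Module.finrank F C = k) :
    (∀ u v : Fin n × Fin (Fintype.card F - 1) → ℕ,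
      (fun i => (∑ j, u (i, j) • α ^ (j.1 + 1)) - ∑ j, v (i, j) • α ^ (j.1 + 1)) ∈ C →
      (∏ s, X s ^ u s) - (∏ s, X s ^ v s) ∈ rowIdeal F n k α L w)
    ∧ codeIdeal F n α C ≤ rowIdeal F n k α L w := by
  have hle : codeIdeal F n α C ≤ rowIdeal F n k α L w := by
    rw [codeIdeal_eq_additiveCodeIdeal hL, rowIdeal_eq_generatorIdeal hL, ← hw,
      ← closure_range_smul_eq_span (powEquiv hL)]
    exact code_ideal_le_row_ideal_general (ZMod 2) (powEquiv hL) _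
  exact ⟨fun u v huv => hle (Ideal.subset_span ⟨u, v, huv, rfl⟩), hle⟩
end

section
/- Let C be an [n,k] linear code over F_q with generator matrix rows w_1,...,w_k. For every codeword c ∈ C, the binomial x^{▲c} − 1 belongs to the ideal I_2 generated by the binomials x^{▲(α^j w_i)} − 1 (1 ≤ i ≤ k, 1 ≤ j ≤ q−1) together with the additive-table relations ⋃_{i=1}^n R(T_+^{(i)}). -/
open MvPolynomial Finset

/-!
Modulo the additive-table relations the map `a ↦ x^{▲a}` turns addition into multiplication, so
for any ideal `I` containing them the vectors all of whose scalar multiples `t • a` satisfy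
`x^{▲(t • a)} ≡ 1` modulo `I` form a linear code. Every nonzero scalar is a power of `α`, so for
`I = I₂` this code contains the rows of the generator matrix, hence their span.
-/

section CharacteristicCrossing

variable {F : Type} [Field F] [Fintype F] [DecidableEq F] {n : ℕ} {α : F}
  {L : {x : F // x ≠ 0} → Fin (Fintype.card F - 1)}

/-- The `i`-th factor of `x^{▲a}` as a function of the coordinate `x = aᵢ`: the variable indexed by
the discrete logarithm of `x`, or `1` if `x = 0`. -/
noncomputable def xupFactor (L : {x : F // x ≠ 0} → Fin (Fintype.card F - 1)) (i : Fin n) (x : F) :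
    MvPolynomial (Fin n × Fin (Fintype.card F - 1)) (ZMod 2) :=
  if h : x ≠ 0 then X (i, L ⟨x, h⟩) else 1

@[simp]
theorem xupFactor_zero (i : Fin n) : xupFactor L i 0 = 1 :=
  dif_neg (not_not_intro rfl)

theorem xupFactor_of_ne_zero (i : Fin n) {x : F} (hx : x ≠ 0) :
    xupFactor L i x = X (i, L ⟨x, hx⟩) :=
  dif_pos hx

theorem xup_eq_prod_xupFactor (a : Fin n → F) : xup F n L a = ∏ i, xupFactor L i (a i) :=
  rfl

@[simp]
theorem xup_zero : xup F n L 0 = 1 := by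
  simp only [xup_eq_prod_xupFactor, Pi.zero_apply, xupFactor_zero, prod_const_one]

theorem xupFactor_mul_sub_mem_addRel (hL : ∀ x : {x : F // x ≠ 0}, α ^ ((L x).1 + 1) = x.1)
    (i : Fin n) {x y : F} (hx : x ≠ 0) (hy : y ≠ 0) :
    xupFactor L i x * xupFactor L i y - xupFactor L i (x + y) ∈ addRel F n α := by
  rw [xupFactor_of_ne_zero i hx, xupFactor_of_ne_zero i hy]
  by_cases hxy : x + y = 0
  · rw [hxy, xupFactor_zero]
    exact .inr ⟨i, L ⟨x, hx⟩, L ⟨y, hy⟩, by rw [hL, hL, hxy], rfl⟩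
  · rw [xupFactor_of_ne_zero i hxy]
    exact .inl ⟨i, L ⟨x, hx⟩, L ⟨y, hy⟩, L ⟨x + y, hxy⟩, by rw [hL, hL, hL], rfl⟩

theorem xupFactor_add_smodEq (hL : ∀ x : {x : F // x ≠ 0}, α ^ ((L x).1 + 1) = x.1)
    (i : Fin n) (x y : F) :
    xupFactor L i (x + y) ≡ xupFactor L i x * xupFactor L i y [SMOD Ideal.span (addRel F n α)] := by
  rcases eq_or_ne x 0 with rfl | hx
  · rw [zero_add, xupFactor_zero, one_mul]
  rcases eq_or_ne y 0 with rfl | hy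
  · rw [add_zero, xupFactor_zero, mul_one]
  exact (SModEq.sub_mem.mpr <| Ideal.subset_span <|
    xupFactor_mul_sub_mem_addRel hL i hx hy).symm

theorem xup_add_smodEq (hL : ∀ x : {x : F // x ≠ 0}, α ^ ((L x).1 + 1) = x.1) (a b : Fin n → F) :
    xup F n L (a + b) ≡ xup F n L a * xup F n L b [SMOD Ideal.span (addRel F n α)] := by
  simp only [xup_eq_prod_xupFactor, ← prod_mul_distrib]
  exact SModEq.prod fun i _ => xupFactor_add_smodEq hL i (a i) (b i)

/-- The largest linear code whose codewords `c` all satisfy `x^{▲c} ≡ 1` modulo an ideal `I`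
containing the additive-table relations. Quantifying over the scalar multiples of `c` builds in
closure under scaling, which `I` need not respect. -/
def codeOfIdeal (hL : ∀ x : {x : F // x ≠ 0}, α ^ ((L x).1 + 1) = x.1)
    (I : Ideal (MvPolynomial (Fin n × Fin (Fintype.card F - 1)) (ZMod 2)))
    (hI : addRel F n α ⊆ I) : Submodule F (Fin n → F) where
  carrier := {c | ∀ t : F, xup F n L (t • c) ≡ 1 [SMOD I]}
  zero_mem' t := by rw [smul_zero, xup_zero]
  add_mem' {a b} ha hb t := by
    have hadd := (xup_add_smodEq hL (t • a) (t • b)).mono (Ideal.span_le.mpr hI)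
    simpa only [smul_add, one_mul] using hadd.trans ((ha t).mul (hb t))
  smul_mem' s c hc t := by simpa only [smul_smul] using hc (t * s)

theorem xup_sub_one_mem_of_mem_codeOfIdeal
    {hL : ∀ x : {x : F // x ≠ 0}, α ^ ((L x).1 + 1) = x.1}
    {I : Ideal (MvPolynomial (Fin n × Fin (Fintype.card F - 1)) (ZMod 2))}
    {hI : addRel F n α ⊆ I} {c : Fin n → F} (hc : c ∈ codeOfIdeal hL I hI) :
    xup F n L c - 1 ∈ I := by
  simpa only [one_smul] using SModEq.sub_mem.mp (hc 1)

theorem addRel_subset_rowIdeal {k : ℕ} (w : Fin k → Fin n → F) :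
    addRel F n α ⊆ rowIdeal F n k α L w :=
  Set.subset_union_right.trans Ideal.subset_span

theorem row_mem_codeOfIdeal_rowIdeal (hL : ∀ x : {x : F // x ≠ 0}, α ^ ((L x).1 + 1) = x.1)
    {k : ℕ} (w : Fin k → Fin n → F) (i : Fin k) :
    w i ∈ codeOfIdeal hL (rowIdeal F n k α L w) (addRel_subset_rowIdeal w) := by
  intro t
  rcases eq_or_ne t 0 with rfl | ht
  · rw [zero_smul, xup_zero]
  · exact SModEq.sub_mem.mpr <| Ideal.subset_span <| .inl ⟨i, L ⟨t, ht⟩, by rw [hL]⟩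

theorem codeword_binomial_mem_row_ideal_general
    (hL : ∀ x : {x : F // x ≠ 0}, α ^ ((L x).1 + 1) = x.1) {k : ℕ} (w : Fin k → Fin n → F) :
    ∀ c ∈ Submodule.span F (Set.range w), xup F n L c - 1 ∈ rowIdeal F n k α L w := by
  intro c hc
  have hspan : Submodule.span F (Set.range w) ≤
      codeOfIdeal hL (rowIdeal F n k α L w) (addRel_subset_rowIdeal w) :=
    Submodule.span_le.mpr (Set.range_subset_iff.mpr (row_mem_codeOfIdeal_rowIdeal hL w))
  exact xup_sub_one_mem_of_mem_codeOfIdeal (hspan hc)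

end CharacteristicCrossing

/-- Let `C` be an `[n,k]` linear code over `F` with generator matrix rows
`w₁, …, w_k`.  For every codeword `c ∈ C`, the binomial `x^{▲c} − 1` belongs to the ideal
`I₂` generated by the row binomials `x^{▲(αʲ wᵢ)} − 1` (for `1 ≤ i ≤ k`, `1 ≤ j ≤ q-1`)
together with the additive-table relations `⋃ᵢ R(T₊⁽ⁱ⁾)`. -/
theorem codeword_binomial_mem_row_ideal
    (F : Type) [Field F] [Fintype F] [DecidableEq F] (n k : ℕ) (hn : 0 < n) (α : F)
    (L : {x : F // x ≠ 0} → Fin (Fintype.card F - 1))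
    (hL : ∀ x : {x : F // x ≠ 0}, α ^ ((L x).1 + 1) = x.1)
    (C : Submodule F (Fin n → F)) (w : Fin k → Fin n → F)
    (hw : Submodule.span F (Set.range w) = C)
    (hdim : Module.finrank F C = k) :
    ∀ c ∈ C, xup F n L c - 1 ∈ rowIdeal F n k α L w := by
  subst hw
  exact codeword_binomial_mem_row_ideal_general hL w
end

section
/- For any two vectors a, b ∈ F_q^n, the difference x^{▲a} − x^{▲b} is congruent to (x^{▲(a−b)} − 1)·x^{▲b} modulo the relations ideal: x^{▲a} − x^{▲b} − (x^{▲(a−b)} − 1)·x^{▲b} ∈ J = ⟨⋃_{i=1}^n R(T_+^{(i)})⟩. Consequently, if x^{▲(a−b)} − 1 lies in an ideal I containing J, then x^{▲a} − x^{▲b} ∈ I. -/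
open MvPolynomial Finset

/-!
Modulo the relations, adding field elements in one coordinate multiplies the corresponding
variables, so `a ↦ x^{▲a}` becomes multiplicative: `x^{▲(a-b)} x^{▲b} ≡ x^{▲a}`. The claim is
this congruence with `x^{▲b}` subtracted from both sides.
-/

section Coordinate

variable {ι κ M R : Type*} [Zero M] [DecidableEq M] [CommSemiring R]

/-- The factor that an entry `x` in coordinate `i` contributes to the monomial `x^{▲a}`: the
variable with index `(i, L x)`, or `1` if `x = 0`. -/
noncomputable def coordMonomial (L : {x : M // x ≠ 0} → κ) (i : ι) (x : M) :
    MvPolynomial (ι × κ) R :=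
  if h : x ≠ 0 then X (i, L ⟨x, h⟩) else 1

variable (L : {x : M // x ≠ 0} → κ) (i : ι)

@[simp]
theorem coordMonomial_zero : (coordMonomial L i 0 : MvPolynomial (ι × κ) R) = 1 :=
  dif_neg (not_ne_iff.mpr rfl)

theorem coordMonomial_of_ne_zero {x : M} (hx : x ≠ 0) :
    (coordMonomial L i x : MvPolynomial (ι × κ) R) = X (i, L ⟨x, hx⟩) :=
  dif_pos hx

end Coordinate

section AdditiveRelations

variable {F : Type} [Field F] [Fintype F] [DecidableEq F] {n : ℕ} {α : F}
  {L : {x : F // x ≠ 0} → Fin (Fintype.card F - 1)}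

theorem coordMonomial_mul_coordMonomial_smodEq
    (hL : ∀ x : {x : F // x ≠ 0}, α ^ ((L x).1 + 1) = x.1) (i : Fin n) (x y : F) :
    coordMonomial L i x * coordMonomial L i y ≡ coordMonomial L i (x + y)
      [SMOD Ideal.span (addRel F n α)] := by
  obtain rfl | hx := eq_or_ne x 0
  · simp
  obtain rfl | hy := eq_or_ne y 0
  · simp
  rw [SModEq.sub_mem, coordMonomial_of_ne_zero L i hx, coordMonomial_of_ne_zero L i hy]
  apply Ideal.subset_span
  obtain hxy | hxy := eq_or_ne (x + y) 0
  · rw [hxy, coordMonomial_zero]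
    exact Or.inr ⟨i, _, _, by rw [hL, hL, hxy], rfl⟩
  · rw [coordMonomial_of_ne_zero L i hxy]
    exact Or.inl ⟨i, _, _, _, by rw [hL, hL, hL], rfl⟩

theorem xup_eq_prod_coordMonomial (L : {x : F // x ≠ 0} → Fin (Fintype.card F - 1))
    (a : Fin n → F) : xup F n L a = ∏ i, coordMonomial L i (a i) :=
  rfl

theorem xup_mul_xup_smodEq (hL : ∀ x : {x : F // x ≠ 0}, α ^ ((L x).1 + 1) = x.1)
    (a b : Fin n → F) :
    xup F n L a * xup F n L b ≡ xup F n L (a + b) [SMOD Ideal.span (addRel F n α)] := by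
  simp only [xup_eq_prod_coordMonomial, ← prod_mul_distrib, Pi.add_apply]
  exact SModEq.prod fun i _ => coordMonomial_mul_coordMonomial_smodEq hL i (a i) (b i)

end AdditiveRelations

/-- For any two vectors `a, b ∈ F^n`, the difference `x^{▲a} − x^{▲b}`
is congruent to `(x^{▲(a−b)} − 1) · x^{▲b}` modulo the relations ideal
`J = ⟨⋃ᵢ R(T₊⁽ⁱ⁾)⟩`.  Consequently, if `x^{▲(a−b)} − 1` lies in an ideal `I`
containing `J`, then `x^{▲a} − x^{▲b} ∈ I`. -/
theorem xup_sub_xup_congr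
    (F : Type) [Field F] [Fintype F] [DecidableEq F] (n : ℕ) (hn : 0 < n) (α : F)
    (L : {x : F // x ≠ 0} → Fin (Fintype.card F - 1))
    (hL : ∀ x : {x : F // x ≠ 0}, α ^ ((L x).1 + 1) = x.1)
    (a b : Fin n → F) :
    (xup F n L a - xup F n L b - (xup F n L (a - b) - 1) * xup F n L b
        ∈ Ideal.span (addRel F n α))
    ∧ ∀ I : Ideal (MvPolynomial (Fin n × Fin (Fintype.card F - 1)) (ZMod 2)),
        Ideal.span (addRel F n α) ≤ I → xup F n L (a - b) - 1 ∈ I →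
        xup F n L a - xup F n L b ∈ I := by
  have hcongr : xup F n L a - xup F n L b - (xup F n L (a - b) - 1) * xup F n L b
      ∈ Ideal.span (addRel F n α) := by
    have hmul : xup F n L a - xup F n L (a - b) * xup F n L b ∈ Ideal.span (addRel F n α) := by
      simpa only [sub_add_cancel] using SModEq.sub_mem.mp (xup_mul_xup_smodEq hL (a - b) b).symm
    rwa [sub_one_mul, sub_sub_sub_cancel_right]
  exact ⟨hcongr, fun I hI h => (I.sub_mem_iff_left (I.mul_mem_right _ h)).mp (hI hcongr)⟩
end
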